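/- Let ψ^{AR} be a density operator on A⊗R with A = A₁⊗A₂. Then ∫_{U(A)} ‖ σ^{A₂R}(U) − (I^{A₂}/d_{A₂}) ⊗ ψ^R ‖₁² dU ≤ (2 d_A d_R / d_{A₁}²) ( Tr[(ψ^{AR})²] + 2 Tr[(ψ^A)²] Tr[(ψ^R)²] ). -/

import Mathlib

open Matrix MeasureTheory
open scoped Kronecker ComplexOrder

/-- The positive semidefinite square root of a positive semidefinite matrix (the definition of
the older Mathlib, since removed). -/
noncomputable def Matrix.PosSemidef.sqrt {n 𝕜 : Type*} [Fintype n] [RCLike 𝕜] [DecidableEq n]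
    {A : Matrix n n 𝕜} (hA : A.PosSemidef) : Matrix n n 𝕜 :=
  hA.1.eigenvectorUnitary.1 * diagonal ((↑) ∘ Real.sqrt ∘ hA.1.eigenvalues) *
  (star hA.1.eigenvectorUnitary : Matrix n n 𝕜)

/-- Trace norm `‖M‖₁ = Tr √(Mᴴ M)` of a complex square matrix. -/
noncomputable def traceNorm {n : Type*} [Fintype n] [DecidableEq n] (M : Matrix n n ℂ) : ℝ :=
  ((Matrix.posSemidef_conjTranspose_mul_self M).sqrt.trace).re

noncomputable instance matMeas {m n : Type*} : MeasurableSpace (Matrix m n ℂ) :=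
  (inferInstance : MeasurableSpace (m → n → ℂ))

/-- `σ^{A₂R}(U) = Tr_{A₁}[(U ⊗ I_R) ψ (U ⊗ I_R)ᴴ]`. -/
noncomputable def sigmaA2R {ιA₁ ιA₂ ιR : Type} [Fintype ιA₁] [Fintype ιA₂] [Fintype ιR]
    [DecidableEq ιR]
    (ψ : Matrix ((ιA₁ × ιA₂) × ιR) ((ιA₁ × ιA₂) × ιR) ℂ)
    (U : Matrix (ιA₁ × ιA₂) (ιA₁ × ιA₂) ℂ) : Matrix (ιA₂ × ιR) (ιA₂ × ιR) ℂ :=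
  Matrix.of fun i j => ∑ a₁ : ιA₁,
    ((U ⊗ₖ (1 : Matrix ιR ιR ℂ)) * ψ * (U ⊗ₖ (1 : Matrix ιR ιR ℂ))ᴴ)
      ((a₁, i.1), i.2) ((a₁, j.1), j.2)

/-- Partial trace over the first tensor factor. -/
noncomputable def ptrFst {α β : Type*} [Fintype α] (M : Matrix (α × β) (α × β) ℂ) :
    Matrix β β ℂ :=
  Matrix.of fun i j => ∑ a : α, M (a, i) (a, j)

/-- Partial trace over the second tensor factor. -/
noncomputable def ptrSnd {α β : Type*} [Fintype β] (M : Matrix (α × β) (α × β) ℂ) :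
    Matrix α α ℂ :=
  Matrix.of fun i j => ∑ b : β, M (i, b) (j, b)

/-!
Cut `ψ` into the blocks `X r s` indexed by matrix units of `R`; conjugation by `U ⊗ I_R` acts on
each block separately, so only single matrices `X` on `A = A₁ ⊗ A₂` matter. The second moments of
`Y = U X Uᴴ` form a bilinear form on matrices that is invariant under unitary conjugation, hence a
combination `c₁ tr M tr N + c₂ tr (M N)`. Testing on `M = 1`, on matrix units of `A`, and on
`I ⊗ (matrix unit of A₂)` expresses `|tr X|²`, `‖X‖²` and `𝔼 ‖Tr_{A₁} Y‖²` (Frobenius norms)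
through `c₁` and `c₂`, and eliminating them gives
`𝔼 ‖Tr_{A₁} Y - (tr X / d_{A₂}) I‖² ≤ ‖X‖² / d_{A₁}`. Summing over blocks and bounding the trace
norm on `A₂ ⊗ R` by Cauchy–Schwarz gives the average bound
`(d_{A₂} d_R / d_{A₁}) Tr (ψ ψᴴ)` for an arbitrary matrix `ψ`.
-/

theorem nonempty_of_trace_ne_zero {n R : Type*} [Fintype n] [AddCommMonoid R] {M : Matrix n n R}
    (hM : M.trace ≠ 0) : Nonempty n :=
  (Finset.nonempty_of_sum_ne_zero hM).to_type

section Frobenius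

open scoped Matrix.Norms.Frobenius

variable {m n α β γ δ : Type*} [Fintype m] [Fintype n] [Fintype α] [Fintype β] [Fintype γ]
  [Fintype δ]

theorem frobenius_norm_sq {E : Type*} [SeminormedAddCommGroup E] (M : Matrix m n E) :
    ‖M‖ ^ 2 = ∑ i, ∑ j, ‖M i j‖ ^ 2 := by
  rw [frobenius_norm_def, ← Real.sqrt_eq_rpow, Real.sq_sqrt (by positivity)]
  simp only [Real.rpow_two]

theorem trace_mul_conjTranspose_self (M : Matrix m n ℂ) : (M * Mᴴ).trace = (‖M‖ ^ 2 : ℝ) := by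
  simp [frobenius_norm_sq, trace, mul_apply, Complex.mul_conj']

theorem re_trace_mul_self_nonneg {M : Matrix n n ℂ} (hM : M.IsHermitian) :
    0 ≤ (M * M).trace.re := by
  nth_rw 2 [← hM.eq]
  rw [trace_mul_conjTranspose_self, Complex.ofReal_re]
  positivity

theorem frobenius_norm_sq_eq_sum_submatrix {E : Type*} [SeminormedAddCommGroup E]
    (M : Matrix (α × β) (γ × δ) E) :
    ‖M‖ ^ 2 = ∑ r, ∑ s, ‖M.submatrix (·, r) (·, s)‖ ^ 2 := by
  simp only [frobenius_norm_sq, Fintype.sum_prod_type, submatrix_apply]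
  rw [Finset.sum_comm]
  refine Finset.sum_congr rfl fun r _ => ?_
  rw [Finset.sum_comm_cycle]

theorem frobenius_norm_sub_trace_smul_one_sq [DecidableEq n] [Nonempty n] (M : Matrix n n ℂ) :
    ‖M - (M.trace / Fintype.card n) • (1 : Matrix n n ℂ)‖ ^ 2 =
      ‖M‖ ^ 2 - ‖M.trace‖ ^ 2 / Fintype.card n := by
  rw [← Complex.ofReal_inj, ← trace_mul_conjTranspose_self, Complex.ofReal_sub,
    ← trace_mul_conjTranspose_self]
  push_cast [← Complex.mul_conj']
  simp only [conjTranspose_sub, conjTranspose_smul, conjTranspose_one, sub_mul, mul_sub,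
    smul_mul_assoc, mul_smul_comm, one_mul, mul_one, trace_sub, trace_smul, trace_one,
    trace_conjTranspose, smul_eq_mul, star_div₀, star_natCast, Complex.star_def]
  field_simp
  ring

theorem frobenius_norm_one_sq {R : Type*} [NormedRing R] [NormOneClass R] [DecidableEq n] :
    ‖(1 : Matrix n n R)‖ ^ 2 = Fintype.card n := by
  simp [frobenius_norm_sq, one_apply, apply_ite]

theorem frobenius_norm_single_sq {E : Type*} [SeminormedAddCommGroup E] [DecidableEq m]
    [DecidableEq n] (i : m) (j : n) (c : E) : ‖single i j c‖ ^ 2 = ‖c‖ ^ 2 := by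
  simp [frobenius_norm_sq, single_apply, ite_and, apply_ite]

theorem frobenius_norm_kronecker_sq {R : Type*} [NormedRing R] [NormMulClass R]
    (M : Matrix α β R) (N : Matrix γ δ R) : ‖M ⊗ₖ N‖ ^ 2 = ‖M‖ ^ 2 * ‖N‖ ^ 2 := by
  simp only [frobenius_norm_sq, Fintype.sum_prod_type, kroneckerMap_apply, norm_mul, mul_pow,
    Finset.sum_mul_sum]

theorem traceNorm_sq_le [DecidableEq n] (M : Matrix n n ℂ) :
    traceNorm M ^ 2 ≤ Fintype.card n * ‖M‖ ^ 2 := by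
  have hpos := posSemidef_conjTranspose_mul_self M
  have hsqrt : traceNorm M = ∑ i, √(hpos.1.eigenvalues i) := by
    rw [traceNorm, PosSemidef.sqrt, trace_mul_cycle, Unitary.coe_star_mul_self, one_mul,
      trace_diagonal]
    simp
  have hnorm : ‖M‖ ^ 2 = ∑ i, hpos.1.eigenvalues i := by
    rw [← Complex.ofReal_inj, ← trace_mul_conjTranspose_self, trace_mul_comm,
      hpos.1.trace_eq_sum_eigenvalues]
    simp
  calc traceNorm M ^ 2 ≤ Fintype.card n * ∑ i, √(hpos.1.eigenvalues i) ^ 2 := by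
        rw [hsqrt]
        exact sq_sum_le_card_mul_sum_sq
    _ = Fintype.card n * ‖M‖ ^ 2 := by
        simp only [hnorm, Real.sq_sqrt (hpos.eigenvalues_nonneg _)]

end Frobenius

section InvariantForms

variable {n : Type*} [Fintype n] [DecidableEq n]

theorem permMatrix_mul_single {R : Type*} [NonAssocSemiring R] (π : Equiv.Perm n) (i j : n)
    (c : R) : π.permMatrix R * single i j c = single (π.symm i) j c :=
  (PEquiv.toMatrix_toPEquiv_mul π _).trans (submatrix_single_equiv π (.refl n) i j c)

theorem single_mul_permMatrix {R : Type*} [NonAssocSemiring R] (π : Equiv.Perm n) (i j : n)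
    (c : R) : single i j c * π.permMatrix R = single i (π j) c :=
  (PEquiv.mul_toMatrix_toPEquiv _ π).trans (submatrix_single_equiv (.refl n) π.symm i j c)

theorem permMatrix_mem_unitaryGroup {𝕜 : Type*} [CommRing 𝕜] [StarRing 𝕜] (π : Equiv.Perm n) :
    π.permMatrix 𝕜 ∈ unitaryGroup n 𝕜 := by
  rw [mem_unitaryGroup_iff, star_eq_conjTranspose, conjTranspose_permMatrix, ← permMatrix_mul,
    inv_mul_cancel, permMatrix_one]

theorem diagonal_mem_unitaryGroup {𝕜 : Type*} [CommRing 𝕜] [StarRing 𝕜] {v : n → 𝕜}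
    (hv : ∀ i, v i * star (v i) = 1) : diagonal v ∈ unitaryGroup n 𝕜 := by
  rw [mem_unitaryGroup_iff, star_eq_conjTranspose, diagonal_conjTranspose, diagonal_mul_diagonal,
    ← diagonal_one]
  exact congrArg diagonal (funext hv)

/-- Invariance of a bilinear form under simultaneous unitary conjugation of both arguments. -/
def ConjInvariant (B : Matrix n n ℂ →ₗ[ℂ] Matrix n n ℂ →ₗ[ℂ] ℂ) : Prop :=
  ∀ V ∈ unitaryGroup n ℂ, ∀ M N, B (V * M * Vᴴ) (V * N * Vᴴ) = B M N

namespace ConjInvariant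

variable {B : Matrix n n ℂ →ₗ[ℂ] Matrix n n ℂ →ₗ[ℂ] ℂ}

theorem apply_single_perm (hB : ConjInvariant B) (π : Equiv.Perm n) (w x y z : n) :
    B (single (π w) (π x) 1) (single (π y) (π z) 1) = B (single w x 1) (single y z 1) := by
  have hconj : ∀ i j, π.permMatrix ℂ * single (π i) (π j) 1 * (π.permMatrix ℂ)ᴴ =
      single i j 1 := fun i j => by
    rw [conjTranspose_permMatrix, permMatrix_mul_single, single_mul_permMatrix,
      π.symm_apply_apply, Equiv.Perm.inv_def, π.symm_apply_apply]
  rw [← hB _ (permMatrix_mem_unitaryGroup π), hconj, hconj]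

theorem apply_single_eq_phase_mul (hB : ConjInvariant B) {v : n → ℂ}
    (hv : ∀ i, v i * star (v i) = 1) (w x y z : n) :
    B (single w x 1) (single y z 1) =
      v w * star (v x) * (v y * star (v z)) * B (single w x 1) (single y z 1) := by
  have hconj : ∀ i j, diagonal v * single i j 1 * (diagonal v)ᴴ =
      (v i * star (v j)) • single i j 1 := fun i j => by
    ext a b
    simp +contextual [diagonal_conjTranspose, mul_diagonal, diagonal_mul, single_apply]
  conv_lhs => rw [← hB _ (diagonal_mem_unitaryGroup hv), hconj, hconj, map_smul,
    LinearMap.map_smul₂, smul_eq_mul, smul_eq_mul]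
  ring

theorem apply_single_eq_zero (hB : ConjInvariant B) {w x y z : n}
    (h : ¬ ((w = x ∧ y = z) ∨ (w = z ∧ x = y))) : B (single w x 1) (single y z 1) = 0 := by
  let phase (k i : n) : ℂ := if i = k then Complex.I else 1
  have hphase (k : n) := hB.apply_single_eq_phase_mul (v := phase k)
    (fun i => by by_cases hi : i = k <;> simp [phase, hi]) w x y z
  -- The phase of index `k` acts by a nontrivial power of `I` when `k` occurs a different number
  -- of times in `(w, y)` and in `(x, z)`.
  suffices hk : ∃ k, phase k w * star (phase k x) * (phase k y * star (phase k z)) ≠ 1 by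
    obtain ⟨k, hk⟩ := hk
    by_contra h0
    exact hk (mul_right_cancel₀ h0 (by rw [one_mul]; exact (hphase k).symm))
  by_cases hwx : w = x
  · have hyz : z ≠ y := fun e => h (.inl ⟨hwx, e.symm⟩)
    refine ⟨y, ?_⟩
    subst hwx
    by_cases hwy : w = y <;> simp [phase, hwy, hyz, Complex.ext_iff]
  by_cases hwz : w = z
  · have hxy : x ≠ y := fun e => h (.inr ⟨hwz, e⟩)
    refine ⟨y, ?_⟩
    subst hwz
    by_cases hwy : w = y <;> simp [phase, hwy, hxy, Complex.ext_iff]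
  · refine ⟨w, ?_⟩
    by_cases hyw : y = w <;>
      simp [phase, hyw, Ne.symm hwx, Ne.symm hwz, Complex.ext_iff, neg_eq_iff_add_eq_zero]

theorem apply_mul_of_anticommute (hB : ConjInvariant B) {S D : Matrix n n ℂ}
    (hS : S.IsHermitian) (hSS : S * S = 1) (hSD : S * D = -(D * S)) :
    B (D * S) (D * S) = -B D D := by
  -- `V = exp (-iπS/4)` up to a phase that makes its coefficients rational
  set c : ℂ := (1 - Complex.I) / 2
  have hc : c * star c = 1 / 2 := by
    simp only [c, star_div₀, star_sub, star_one, star_ofNat, Complex.star_def, Complex.conj_I]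
    linear_combination (-1 / 4) * Complex.I_mul_I
  set V : Matrix n n ℂ := c • (1 - Complex.I • S)
  have hVstar : Vᴴ = star c • (1 + Complex.I • S) := by
    simp [V, hS.eq, sub_eq_add_neg]
  have hV : V ∈ unitaryGroup n ℂ := by
    rw [mem_unitaryGroup_iff, star_eq_conjTranspose, hVstar, smul_mul_smul_comm, hc]
    have hmul : (1 - Complex.I • S) * (1 + Complex.I • S) = (2 : ℂ) • 1 := by
      simp only [sub_mul, mul_add, one_mul, mul_one, smul_mul_smul_comm, Complex.I_mul_I, hSS]
      module
    rw [hmul, smul_smul, one_div, inv_mul_cancel₀ two_ne_zero, one_smul]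
  have hVD : V * D * Vᴴ = Complex.I • (D * S) := by
    rw [hVstar, smul_mul_assoc, smul_mul_smul_comm, hc]
    simp only [sub_mul, mul_add, one_mul, mul_one, smul_mul_assoc, mul_smul_comm, neg_mul,
      mul_assoc, hSS, hSD, smul_add, smul_sub, smul_neg, smul_smul, Complex.I_mul_I]
    module
  have h := hB V hV D D
  rw [hVD, map_smul, LinearMap.map_smul₂, smul_smul, Complex.I_mul_I, neg_one_smul] at h
  rw [← h, neg_neg]

theorem apply_single_self (hB : ConjInvariant B) {i j : n} (hij : i ≠ j) :
    B (single i i 1) (single i i 1) =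
      B (single i i 1) (single j j 1) + B (single i j 1) (single j i 1) := by
  set S : Matrix n n ℂ := (Equiv.swap i j).permMatrix ℂ
  set D : Matrix n n ℂ := single i i 1 - single j j 1
  have hS : S.IsHermitian := by
    rw [IsHermitian, conjTranspose_permMatrix, Equiv.swap_inv]
  have hSS : S * S = 1 := by
    rw [← permMatrix_mul, Equiv.swap_mul_self, permMatrix_one]
  have hSD : S * D = single j i 1 - single i j 1 := by
    simp only [S, D, mul_sub, permMatrix_mul_single, Equiv.symm_swap, Equiv.swap_apply_left,
      Equiv.swap_apply_right]
  have hDS : D * S = single i j 1 - single j i 1 := by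
    simp only [S, D, sub_mul, single_mul_permMatrix, Equiv.swap_apply_left,
      Equiv.swap_apply_right]
  have hanti := hB.apply_mul_of_anticommute hS hSS (D := D) (by rw [hSD, hDS, neg_sub])
  rw [hDS] at hanti
  have hswap_diag := hB.apply_single_perm (Equiv.swap i j) i i i i
  have hswap_cross := hB.apply_single_perm (Equiv.swap i j) i i j j
  have hswap_off := hB.apply_single_perm (Equiv.swap i j) i j j i
  simp only [Equiv.swap_apply_left, Equiv.swap_apply_right] at hswap_diag hswap_cross hswap_off
  have hzero : B (single i j 1) (single i j 1) = 0 :=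
    hB.apply_single_eq_zero (by tauto)
  have hzero' : B (single j i 1) (single j i 1) = 0 :=
    hB.apply_single_eq_zero (by tauto)
  simp only [D, map_sub, LinearMap.sub_apply, hzero, hzero', hswap_diag, hswap_cross, hswap_off]
    at hanti
  linear_combination hanti / 2

theorem exists_apply_single_of_ne [Nontrivial n] (hB : ConjInvariant B) :
    ∃ c₁ c₂ : ℂ, ∀ k l : n, k ≠ l → B (single k k 1) (single l l 1) = c₁ ∧
      B (single k l 1) (single l k 1) = c₂ := by
  obtain ⟨i, j, hij⟩ := exists_pair_ne n
  refine ⟨B (single i i 1) (single j j 1), B (single i j 1) (single j i 1), fun k l hkl => ?_⟩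
  obtain ⟨π, rfl, rfl⟩ : ∃ π : Equiv.Perm n, π i = k ∧ π j = l :=
    MulAction.is_two_pretransitive_iff.mp (Equiv.Perm.isMultiplyPretransitive n 2) hij hkl
  exact ⟨hB.apply_single_perm π i i j j, hB.apply_single_perm π i j j i⟩

theorem exists_apply_single_eq (hB : ConjInvariant B) :
    ∃ c₁ c₂ : ℂ, ∀ w x y z : n, B (single w x 1) (single y z 1) =
      c₁ * ((single w x (1 : ℂ)).trace * (single y z (1 : ℂ)).trace) +
        c₂ * (single w x (1 : ℂ) * single y z (1 : ℂ)).trace := by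
  obtain hn | hn := subsingleton_or_nontrivial n
  · obtain hn' | ⟨⟨i⟩⟩ := isEmpty_or_nonempty n
    · exact ⟨0, 0, fun w => isEmptyElim w⟩
    · refine ⟨0, B (single i i 1) (single i i 1), fun w x y z => ?_⟩
      simp [Subsingleton.elim w i, Subsingleton.elim x i, Subsingleton.elim y i,
        Subsingleton.elim z i]
  obtain ⟨c₁, c₂, hne⟩ := hB.exists_apply_single_of_ne
  refine ⟨c₁, c₂, fun w x y z => ?_⟩
  have hself (k : n) : B (single k k 1) (single k k 1) = c₁ + c₂ := by
    obtain ⟨l, hl⟩ := exists_ne k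
    rw [hB.apply_single_self hl.symm, (hne k l hl.symm).1, (hne k l hl.symm).2]
  by_cases h : (w = x ∧ y = z) ∨ (w = z ∧ x = y)
  · obtain ⟨rfl, rfl⟩ | ⟨rfl, rfl⟩ := h
    · obtain rfl | hwy := eq_or_ne w y
      · simp [hself]
      · simp [hne w y hwy, hwy]
    · obtain rfl | hwx := eq_or_ne w x
      · simp [hself]
      · simp [hne w x hwx, hwx]
  · have htrace : (single w x (1 : ℂ)).trace * (single y z (1 : ℂ)).trace = 0 := by
      obtain hwx | hwx := eq_or_ne w x
      · rw [trace_single_eq_of_ne y z _ fun hyz => h (.inl ⟨hwx, hyz⟩), mul_zero]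
      · rw [trace_single_eq_of_ne w x _ hwx, zero_mul]
    have hmul : (single w x (1 : ℂ) * single y z (1 : ℂ)).trace = 0 := by
      rw [trace_single_mul, single_apply_of_ne, smul_zero]
      exact fun hxw => h (.inr ⟨hxw.2.symm, hxw.1.symm⟩)
    rw [hB.apply_single_eq_zero h, htrace, hmul, mul_zero, mul_zero, add_zero]

theorem exists_eq_trace_mul_trace_add_trace_mul (hB : ConjInvariant B) :
    ∃ c₁ c₂ : ℂ, ∀ M N, B M N = c₁ * (M.trace * N.trace) + c₂ * (M * N).trace := by
  obtain ⟨c₁, c₂, hunits⟩ := hB.exists_apply_single_eq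
  let τ := traceLinearMap n ℂ ℂ
  have hform : B = c₁ • (LinearMap.mul ℂ ℂ).compl₁₂ τ τ +
      c₂ • (LinearMap.mul ℂ (Matrix n n ℂ)).compr₂ τ := by
    refine ext_linearMap ℂ fun w x => LinearMap.ext_ring <| ext_linearMap ℂ fun y z =>
      LinearMap.ext_ring ?_
    simpa [τ] using hunits w x y z
  refine ⟨c₁, c₂, fun M N => ?_⟩
  simp [hform, τ]

end ConjInvariant

end InvariantForms

section UnitaryConj

open scoped Matrix.Norms.Frobenius

variable {n : Type*} [Fintype n] [DecidableEq n]

instance {m n : Type*} [Finite m] [Finite n] : BorelSpace (Matrix m n ℂ) :=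
  haveI := Fintype.ofFinite m
  haveI := Fintype.ofFinite n
  inferInstanceAs (BorelSpace (m → n → ℂ))

instance : CompactSpace (unitaryGroup n ℂ) :=
  isCompact_iff_compactSpace.mp <| IsCompact.of_isClosed_subset
    (isCompact_univ_pi fun _ => isCompact_univ_pi fun _ => isCompact_closedBall (0 : ℂ) 1)
    isClosed_unitary fun U hU i _ j _ => by simpa using entry_norm_bound_of_unitary hU i j

theorem integrable_of_continuous {X E : Type*} [TopologicalSpace X] [CompactSpace X]
    [MeasurableSpace X] [OpensMeasurableSpace X] [NormedAddCommGroup E] {μ : Measure X}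
    [IsFiniteMeasureOnCompacts μ] {f : X → E} (hf : Continuous f) : Integrable f μ :=
  hf.integrable_of_hasCompactSupport (.of_compactSpace f)

/-- The unitary conjugate `U X Uᴴ`, as a function of `U` for fixed `X`; a random matrix once the
unitary group carries a probability measure. -/
def unitaryConj (X : Matrix n n ℂ) (U : unitaryGroup n ℂ) : Matrix n n ℂ :=
  U * X * (U : Matrix n n ℂ)ᴴ

theorem continuous_unitaryConj (X : Matrix n n ℂ) : Continuous (unitaryConj X) := by
  unfold unitaryConj
  fun_prop

theorem unitaryConj_mul (X : Matrix n n ℂ) (V U : unitaryGroup n ℂ) :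
    unitaryConj X (V * U) = V * unitaryConj X U * (V : Matrix n n ℂ)ᴴ := by
  simp only [unitaryConj, Submonoid.coe_mul, conjTranspose_mul, mul_assoc]

theorem trace_conj_mul_conj {V : Matrix n n ℂ} (hV : V ∈ unitaryGroup n ℂ) (M N : Matrix n n ℂ) :
    (V * M * Vᴴ * (V * N * Vᴴ)).trace = (M * N).trace := by
  have hVV : Vᴴ * V = 1 := mem_unitaryGroup_iff'.mp hV
  calc (V * M * Vᴴ * (V * N * Vᴴ)).trace = (V * (M * (Vᴴ * V) * N) * Vᴴ).trace := by
        simp only [mul_assoc]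
    _ = (M * N).trace := by rw [hVV, mul_one, trace_mul_cycle, hVV, one_mul]

theorem trace_unitaryConj (X : Matrix n n ℂ) (U : unitaryGroup n ℂ) :
    (unitaryConj X U).trace = X.trace := by
  have hUU : (U : Matrix n n ℂ)ᴴ * U = 1 := mem_unitaryGroup_iff'.mp U.2
  rw [unitaryConj, trace_mul_cycle, hUU, one_mul]

theorem norm_unitaryConj_sq (X : Matrix n n ℂ) (U : unitaryGroup n ℂ) :
    ‖unitaryConj X U‖ ^ 2 = ‖X‖ ^ 2 := by
  rw [← Complex.ofReal_inj, ← trace_mul_conjTranspose_self, ← trace_mul_conjTranspose_self,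
    ← trace_conj_mul_conj U.2 X Xᴴ]
  simp only [unitaryConj, conjTranspose_mul, conjTranspose_conjTranspose, mul_assoc]

/-- The second moment form `(M, N) ↦ 𝔼 [tr (M Y) tr (N Yᴴ)]` of the random matrix
`Y = U X Uᴴ`; on `(M, Mᴴ)` it is the mean square of the linear functional `tr (M Y)`. -/
noncomputable def secondMoment (μ : Measure (unitaryGroup n ℂ)) [IsFiniteMeasure μ]
    (X : Matrix n n ℂ) : Matrix n n ℂ →ₗ[ℂ] Matrix n n ℂ →ₗ[ℂ] ℂ :=
  have hint (M N : Matrix n n ℂ) : Integrable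
      (fun U => (M * unitaryConj X U).trace * (N * (unitaryConj X U)ᴴ).trace) μ :=
    integrable_of_continuous <| by have := continuous_unitaryConj X; fun_prop
  LinearMap.mk₂ ℂ
    (fun M N => ∫ U, (M * unitaryConj X U).trace * (N * (unitaryConj X U)ᴴ).trace ∂μ)
    (fun M M' N => by
      simp only [add_mul, trace_add]
      exact integral_add (hint M N) (hint M' N))
    (fun c M N => by
      simp only [smul_mul_assoc, trace_smul, smul_eq_mul, mul_assoc, integral_const_mul])
    (fun M N N' => by
      simp only [add_mul, trace_add, mul_add]
      exact integral_add (hint M N) (hint M N'))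
    (fun c M N => by
      simp only [smul_mul_assoc, trace_smul, smul_eq_mul, mul_left_comm, integral_const_mul])

variable (μ : Measure (unitaryGroup n ℂ))

theorem secondMoment_apply [IsFiniteMeasure μ] (X M N : Matrix n n ℂ) : secondMoment μ X M N =
    ∫ U, (M * unitaryConj X U).trace * (N * (unitaryConj X U)ᴴ).trace ∂μ := rfl

theorem conjInvariant_secondMoment [IsFiniteMeasure μ] [μ.IsMulLeftInvariant]
    (X : Matrix n n ℂ) : ConjInvariant (secondMoment μ X) := by
  intro V hV M N
  rw [secondMoment_apply, ← integral_mul_left_eq_self _ (⟨V, hV⟩ : unitaryGroup n ℂ)]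
  have hconj (Y : Matrix n n ℂ) : (V * Y * Vᴴ)ᴴ = V * Yᴴ * Vᴴ := by
    simp only [conjTranspose_mul, conjTranspose_conjTranspose, mul_assoc]
  simp only [unitaryConj_mul, hconj, trace_conj_mul_conj hV, secondMoment_apply]

theorem secondMoment_conjTranspose [IsFiniteMeasure μ] (X M : Matrix n n ℂ) :
    secondMoment μ X M Mᴴ = (∫ U, ‖(M * unitaryConj X U).trace‖ ^ 2 ∂μ : ℝ) := by
  rw [secondMoment_apply, ← integral_complex_ofReal]
  refine integral_congr_ae (.of_forall fun U => ?_)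
  beta_reduce
  rw [← conjTranspose_mul, trace_conjTranspose, trace_mul_comm _ M]
  simp [Complex.mul_conj']

theorem exists_integral_norm_trace_mul_unitaryConj_sq [IsFiniteMeasure μ]
    [μ.IsMulLeftInvariant] (X : Matrix n n ℂ) : ∃ c₁ c₂ : ℝ, ∀ M : Matrix n n ℂ,
      ∫ U, ‖(M * unitaryConj X U).trace‖ ^ 2 ∂μ = c₁ * ‖M.trace‖ ^ 2 + c₂ * ‖M‖ ^ 2 := by
  obtain ⟨c₁, c₂, hform⟩ :=
    (conjInvariant_secondMoment μ X).exists_eq_trace_mul_trace_add_trace_mul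
  refine ⟨c₁.re, c₂.re, fun M => ?_⟩
  have h := hform M Mᴴ
  rw [secondMoment_conjTranspose, trace_mul_conjTranspose_self, trace_conjTranspose,
    Complex.star_def, Complex.mul_conj', ← Complex.ofReal_pow] at h
  simpa [-Complex.ofReal_pow] using congrArg Complex.re h

end UnitaryConj

section PartialTrace

variable {α β : Type*}

theorem trace_ptrFst [Fintype α] [Fintype β] (M : Matrix (α × β) (α × β) ℂ) :
    (ptrFst M).trace = M.trace := by
  simp only [trace, ptrFst, diag_apply, of_apply, Fintype.sum_prod_type_right]

theorem trace_one_kronecker_mul [Fintype α] [DecidableEq α] [Fintype β] (N : Matrix β β ℂ)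
    (M : Matrix (α × β) (α × β) ℂ) :
    (((1 : Matrix α α ℂ) ⊗ₖ N) * M).trace = (N * ptrFst M).trace := by
  simp only [trace, diag_apply, mul_apply, Fintype.sum_prod_type_right, kroneckerMap_apply,
    one_apply, ite_mul, one_mul, zero_mul, Finset.sum_ite_eq, Finset.mem_univ, if_true, ptrFst,
    of_apply, Finset.mul_sum]
  exact Finset.sum_congr rfl fun i _ => Finset.sum_comm

theorem continuous_ptrFst [Fintype α] :
    Continuous (ptrFst : Matrix (α × β) (α × β) ℂ → Matrix β β ℂ) := by
  unfold ptrFst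
  fun_prop

theorem isHermitian_ptrFst [Fintype α] {M : Matrix (α × β) (α × β) ℂ}
    (hM : M.IsHermitian) : (ptrFst M).IsHermitian := by
  ext i j
  simp only [ptrFst, conjTranspose_apply, of_apply, star_sum, hM.apply]

theorem isHermitian_ptrSnd [Fintype β] {M : Matrix (α × β) (α × β) ℂ}
    (hM : M.IsHermitian) : (ptrSnd M).IsHermitian := by
  ext i j
  simp only [ptrSnd, conjTranspose_apply, of_apply, star_sum, hM.apply]

theorem re_trace_mul_conjTranspose_self_le_two_mul [Fintype α] [Fintype β]
    {M : Matrix (α × β) (α × β) ℂ} (hM : M.IsHermitian) :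
    (M * Mᴴ).trace.re ≤ 2 * ((M * M).trace.re +
      2 * (ptrSnd M * ptrSnd M).trace.re * (ptrFst M * ptrFst M).trace.re) := by
  have hM_sq := re_trace_mul_self_nonneg hM
  have hFst := re_trace_mul_self_nonneg (isHermitian_ptrFst hM)
  have hSnd := re_trace_mul_self_nonneg (isHermitian_ptrSnd hM)
  rw [hM.eq]
  linarith [mul_nonneg hSnd hFst]

end PartialTrace

section SingleBlock

open scoped Matrix.Norms.Frobenius

variable {α β : Type*} [Fintype α] [DecidableEq α] [Fintype β] [DecidableEq β]

theorem sum_norm_trace_single_sq {n : Type*} [Fintype n] [DecidableEq n] :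
    ∑ i, ∑ j, ‖(single j i 1 : Matrix n n ℂ).trace‖ ^ 2 = Fintype.card n := by
  simp [trace, diag, single_apply, apply_ite, ite_and]

theorem integral_frobenius_norm_sq {Ω m n : Type*} [Fintype m] [Fintype n] [MeasurableSpace Ω]
    {μ : Measure Ω} {Z : Ω → Matrix m n ℂ} (hZ : ∀ i j, Integrable (fun ω => ‖Z ω i j‖ ^ 2) μ) :
    ∫ ω, ‖Z ω‖ ^ 2 ∂μ = ∑ i, ∑ j, ∫ ω, ‖Z ω i j‖ ^ 2 ∂μ := by
  simp only [frobenius_norm_sq]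
  rw [integral_finsetSum _ fun i _ => integrable_finsetSum _ fun j _ => hZ i j]
  exact Finset.sum_congr rfl fun i _ => integral_finsetSum _ fun j _ => hZ i j

theorem exists_moment_coefficients (μ : Measure (unitaryGroup (α × β) ℂ))
    [IsProbabilityMeasure μ] [μ.IsMulLeftInvariant] (X : Matrix (α × β) (α × β) ℂ) :
    ∃ c₁ c₂ : ℝ,
      ‖X.trace‖ ^ 2 = c₁ * (Fintype.card α * Fintype.card β) ^ 2 +
        c₂ * (Fintype.card α * Fintype.card β) ∧
      ‖X‖ ^ 2 = c₁ * (Fintype.card α * Fintype.card β) +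
        c₂ * (Fintype.card α * Fintype.card β) ^ 2 ∧
      ∫ U, ‖ptrFst (unitaryConj X U)‖ ^ 2 ∂μ =
        c₁ * (Fintype.card α ^ 2 * Fintype.card β) +
          c₂ * (Fintype.card α * Fintype.card β ^ 2) := by
  obtain ⟨c₁, c₂, hmoment⟩ := exists_integral_norm_trace_mul_unitaryConj_sq μ X
  have hcont := continuous_unitaryConj X
  refine ⟨c₁, c₂, ?_, ?_, ?_⟩
  · simpa [trace_unitaryConj, frobenius_norm_one_sq] using hmoment 1
  · have hentry (i j : α × β) (U : unitaryGroup (α × β) ℂ) :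
        unitaryConj X U i j = (single j i 1 * unitaryConj X U).trace := by simp [trace_single_mul]
    calc ‖X‖ ^ 2 = ∫ U, ‖unitaryConj X U‖ ^ 2 ∂μ := by simp [norm_unitaryConj_sq]
      _ = ∑ i, ∑ j, ∫ U, ‖unitaryConj X U i j‖ ^ 2 ∂μ :=
        integral_frobenius_norm_sq fun i j => integrable_of_continuous (by fun_prop)
      _ = _ := by
        simp only [hentry, hmoment, frobenius_norm_single_sq, Finset.sum_add_distrib,
          ← Finset.mul_sum, sum_norm_trace_single_sq]
        simp [sq]
  · have hentry (i j : β) (U : unitaryGroup (α × β) ℂ) : ptrFst (unitaryConj X U) i j =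
        (((1 : Matrix α α ℂ) ⊗ₖ single j i 1) * unitaryConj X U).trace := by
      simp [trace_one_kronecker_mul, trace_single_mul]
    have hcont' := continuous_ptrFst.comp hcont
    rw [integral_frobenius_norm_sq fun i j => integrable_of_continuous (by fun_prop)]
    simp only [hentry, hmoment, trace_kronecker, norm_mul, mul_pow, frobenius_norm_kronecker_sq,
      frobenius_norm_single_sq, frobenius_norm_one_sq, Finset.sum_add_distrib,
      ← Finset.mul_sum, sum_norm_trace_single_sq]
    simp [sq]

theorem error_le_of_moments {a b c₁ c₂ t p : ℝ} (ha : 1 ≤ a) (hb : 1 ≤ b) (ht : 0 ≤ t)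
    (htrace : t = c₁ * (a * b) ^ 2 + c₂ * (a * b))
    (hnorm : p = c₁ * (a * b) + c₂ * (a * b) ^ 2) (hpyth : t / (a * b) ≤ p) :
    c₁ * (a ^ 2 * b) + c₂ * (a * b ^ 2) - t / b ≤ p / a := by
  have ha' : 0 < a := by linarith
  have hb' : 0 < b := by linarith
  have htrace' : t / (a * b) = c₁ * (a * b) + c₂ := by rw [htrace]; field_simp
  have htrace_nonneg : 0 ≤ t / (a * b) := by positivity
  have hc₂ : 0 ≤ c₂ * ((a * b) ^ 2 - 1) := by linarith
  have hc₂' : 0 ≤ c₂ * (a ^ 2 - 1) := by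
    obtain hc | hc := le_or_gt 0 c₂
    · exact mul_nonneg hc (by nlinarith)
    · have hab : (a * b) ^ 2 - 1 ≤ 0 := nonpos_of_mul_nonneg_right hc₂ hc
      have haab : a ^ 2 ≤ (a * b) ^ 2 := by gcongr; exact le_mul_of_one_le_right ha'.le hb
      exact mul_nonneg_of_nonpos_of_nonpos hc.le (by linarith)
  have htb : t / b = c₁ * (a ^ 2 * b) + c₂ * a := by rw [htrace, div_eq_iff hb'.ne']; ring
  rw [le_div_iff₀ ha', htb]
  linarith

theorem integral_norm_ptrFst_unitaryConj_sub_sq_le [Nonempty α] [Nonempty β]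
    (μ : Measure (unitaryGroup (α × β) ℂ)) [IsProbabilityMeasure μ] [μ.IsMulLeftInvariant]
    (X : Matrix (α × β) (α × β) ℂ) :
    ∫ U, ‖ptrFst (unitaryConj X U) - (X.trace / Fintype.card β) • (1 : Matrix β β ℂ)‖ ^ 2 ∂μ ≤
      ‖X‖ ^ 2 / Fintype.card α := by
  obtain ⟨c₁, c₂, htrace, hnorm, hptr⟩ := exists_moment_coefficients μ X
  have herror : ∫ U, ‖ptrFst (unitaryConj X U) - (X.trace / Fintype.card β) • 1‖ ^ 2 ∂μ =
      ∫ U, ‖ptrFst (unitaryConj X U)‖ ^ 2 ∂μ - ‖X.trace‖ ^ 2 / Fintype.card β := by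
    have hpyth (U : unitaryGroup (α × β) ℂ) :=
      frobenius_norm_sub_trace_smul_one_sq (ptrFst (unitaryConj X U))
    simp only [trace_ptrFst, trace_unitaryConj] at hpyth
    have hcont := continuous_ptrFst.comp (continuous_unitaryConj X)
    have hint : Integrable (fun U => ‖ptrFst (unitaryConj X U)‖ ^ 2) μ :=
      integrable_of_continuous (by fun_prop)
    simp only [hpyth]
    rw [integral_sub hint (integrable_const _), integral_const, probReal_univ, one_smul]
  have hX : ‖X.trace‖ ^ 2 / (Fintype.card α * Fintype.card β) ≤ ‖X‖ ^ 2 := by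
    have h := (sq_nonneg _).trans_eq (frobenius_norm_sub_trace_smul_one_sq X)
    rwa [Fintype.card_prod, Nat.cast_mul, sub_nonneg] at h
  rw [herror, hptr]
  exact error_le_of_moments (by exact_mod_cast Fintype.card_pos)
    (by exact_mod_cast Fintype.card_pos) (sq_nonneg _) htrace hnorm hX

end SingleBlock

section Decoupling

open scoped Matrix.Norms.Frobenius

theorem kronecker_one_conj_submatrix {α R : Type*} [Fintype α] [Fintype R] [DecidableEq R]
    (ψ : Matrix (α × R) (α × R) ℂ) (U : Matrix α α ℂ) (r s : R) :
    ((U ⊗ₖ (1 : Matrix R R ℂ)) * ψ * (U ⊗ₖ (1 : Matrix R R ℂ))ᴴ).submatrix (·, r) (·, s) =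
      U * ψ.submatrix (·, r) (·, s) * Uᴴ := by
  ext i j
  simp [mul_apply, Fintype.sum_prod_type, kroneckerMap_apply, conjTranspose_apply, one_apply,
    apply_ite]

variable {ιA₁ ιA₂ ιR : Type} [Fintype ιA₁] [Fintype ιA₂] [Fintype ιR] [DecidableEq ιR]

theorem sigmaA2R_submatrix (ψ : Matrix ((ιA₁ × ιA₂) × ιR) ((ιA₁ × ιA₂) × ιR) ℂ)
    (U : Matrix (ιA₁ × ιA₂) (ιA₁ × ιA₂) ℂ) (r s : ιR) :
    (sigmaA2R ψ U).submatrix (·, r) (·, s) = ptrFst (U * ψ.submatrix (·, r) (·, s) * Uᴴ) := by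
  rw [← kronecker_one_conj_submatrix]
  rfl

theorem smul_one_kronecker_ptrFst_submatrix {α β R : Type*} [Fintype α] [DecidableEq β] (c : ℂ)
    (ψ : Matrix (α × R) (α × R) ℂ) (r s : R) :
    ((c • (1 : Matrix β β ℂ)) ⊗ₖ ptrFst ψ).submatrix (·, r) (·, s) =
      (c * (ψ.submatrix (·, r) (·, s)).trace) • 1 := by
  ext i j
  simp [ptrFst, trace, kroneckerMap_apply, mul_right_comm]

theorem integral_norm_sigmaA2R_sub_sq_le [DecidableEq ιA₁] [DecidableEq ιA₂] [Nonempty ιA₁]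
    [Nonempty ιA₂]
    (μ : Measure (unitaryGroup (ιA₁ × ιA₂) ℂ)) [IsProbabilityMeasure μ] [μ.IsMulLeftInvariant]
    (ψ : Matrix ((ιA₁ × ιA₂) × ιR) ((ιA₁ × ιA₂) × ιR) ℂ) :
    ∫ U : unitaryGroup (ιA₁ × ιA₂) ℂ, ‖sigmaA2R ψ U -
      ((Fintype.card ιA₂ : ℂ)⁻¹ • (1 : Matrix ιA₂ ιA₂ ℂ)) ⊗ₖ ptrFst ψ‖ ^ 2 ∂μ ≤
      ‖ψ‖ ^ 2 / Fintype.card ιA₁ := by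
  let X (r s : ιR) := ψ.submatrix (·, r) (·, s)
  let error (r s : ιR) (U : unitaryGroup (ιA₁ × ιA₂) ℂ) : Matrix ιA₂ ιA₂ ℂ :=
    ptrFst (unitaryConj (X r s) U) - ((X r s).trace / Fintype.card ιA₂) • 1
  have hint (r s : ιR) : Integrable (fun U => ‖error r s U‖ ^ 2) μ := by
    have hcont := continuous_ptrFst.comp (continuous_unitaryConj (X r s))
    exact integrable_of_continuous ((hcont.sub continuous_const).norm.pow 2)
  calc _ = ∫ U, ∑ r, ∑ s, ‖error r s U‖ ^ 2 ∂μ := by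
        refine integral_congr_ae (.of_forall fun U => ?_)
        simp only [frobenius_norm_sq_eq_sum_submatrix, submatrix_sub, Pi.sub_apply,
          sigmaA2R_submatrix, smul_one_kronecker_ptrFst_submatrix, inv_mul_eq_div]
        rfl
    _ = ∑ r, ∑ s, ∫ U, ‖error r s U‖ ^ 2 ∂μ := by
        rw [integral_finsetSum _ fun r _ => integrable_finsetSum _ fun s _ => hint r s]
        exact Finset.sum_congr rfl fun r _ => integral_finsetSum _ fun s _ => hint r s
    _ ≤ ∑ r, ∑ s, ‖X r s‖ ^ 2 / Fintype.card ιA₁ := by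
        gcongr with r _ s _
        exact integral_norm_ptrFst_unitaryConj_sub_sq_le μ (X r s)
    _ = ‖ψ‖ ^ 2 / Fintype.card ιA₁ := by
        simp only [frobenius_norm_sq_eq_sum_submatrix ψ, Finset.sum_div, X]

theorem continuous_sigmaA2R (ψ : Matrix ((ιA₁ × ιA₂) × ιR) ((ιA₁ × ιA₂) × ιR) ℂ) :
    Continuous (sigmaA2R ψ) := by
  have hkron : Continuous fun U : Matrix (ιA₁ × ιA₂) (ιA₁ × ιA₂) ℂ =>
      U ⊗ₖ (1 : Matrix ιR ιR ℂ) := by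
    unfold kroneckerMap
    fun_prop
  unfold sigmaA2R
  fun_prop

theorem decoupling_to_product_general [DecidableEq ιA₁] [DecidableEq ιA₂] [Nonempty ιA₁]
    [Nonempty ιA₂]
    (μ : Measure (unitaryGroup (ιA₁ × ιA₂) ℂ)) [IsProbabilityMeasure μ] [μ.IsMulLeftInvariant]
    (ψ : Matrix ((ιA₁ × ιA₂) × ιR) ((ιA₁ × ιA₂) × ιR) ℂ) :
    ∫ U : unitaryGroup (ιA₁ × ιA₂) ℂ, traceNorm (sigmaA2R ψ U -
        ((Fintype.card ιA₂ : ℂ)⁻¹ • (1 : Matrix ιA₂ ιA₂ ℂ)) ⊗ₖ ptrFst ψ) ^ 2 ∂μ ≤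
      Fintype.card ιA₁ * Fintype.card ιA₂ * Fintype.card ιR / (Fintype.card ιA₁ : ℝ) ^ 2 *
        (ψ * ψᴴ).trace.re := by
  set τ := ((Fintype.card ιA₂ : ℂ)⁻¹ • (1 : Matrix ιA₂ ιA₂ ℂ)) ⊗ₖ ptrFst ψ
  have hint : Integrable (fun U : unitaryGroup (ιA₁ × ιA₂) ℂ => ‖sigmaA2R ψ U - τ‖ ^ 2) μ := by
    have hcont := continuous_sigmaA2R ψ
    exact integrable_of_continuous (by fun_prop)
  calc ∫ U : unitaryGroup (ιA₁ × ιA₂) ℂ, traceNorm (sigmaA2R ψ U - τ) ^ 2 ∂μ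
      ≤ ∫ U : unitaryGroup (ιA₁ × ιA₂) ℂ,
          Fintype.card (ιA₂ × ιR) * ‖sigmaA2R ψ U - τ‖ ^ 2 ∂μ :=
        integral_mono_of_nonneg (.of_forall fun _ => sq_nonneg _) (hint.const_mul _)
          (.of_forall fun _ => traceNorm_sq_le _)
    _ ≤ Fintype.card (ιA₂ × ιR) * (‖ψ‖ ^ 2 / Fintype.card ιA₁) := by
        rw [integral_const_mul]
        gcongr
        exact integral_norm_sigmaA2R_sub_sq_le μ ψ
    _ = _ := by
        rw [trace_mul_conjTranspose_self, Complex.ofReal_re, Fintype.card_prod, Nat.cast_mul]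
        field_simp

end Decoupling

/-- **Decoupling with a fixed target state.**  For a density operator `ψ^{AR}` on `A ⊗ R`
with `A = A₁ ⊗ A₂`, the Haar average of `‖σ^{A₂R}(U) − (I^{A₂}/d_{A₂}) ⊗ ψ^R‖₁²` is at most
`(2 d_A d_R / d_{A₁}²)(Tr[(ψ^{AR})²] + 2 Tr[(ψ^A)²] Tr[(ψ^R)²])`. -/
theorem decoupling_to_product
    {ιA₁ ιA₂ ιR : Type} [Fintype ιA₁] [DecidableEq ιA₁] [Fintype ιA₂] [DecidableEq ιA₂]
    [Fintype ιR] [DecidableEq ιR]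
    (ψ : Matrix ((ιA₁ × ιA₂) × ιR) ((ιA₁ × ιA₂) × ιR) ℂ)
    (hψ : ψ.PosSemidef) (hψtr : ψ.trace = 1)
    (μ : Measure (Matrix.unitaryGroup (ιA₁ × ιA₂) ℂ)) [IsProbabilityMeasure μ]
    (hμ : ∀ V : Matrix.unitaryGroup (ιA₁ × ιA₂) ℂ,
      μ.map (fun U : Matrix.unitaryGroup (ιA₁ × ιA₂) ℂ => V * U) = μ) :
    (∫ U : Matrix.unitaryGroup (ιA₁ × ιA₂) ℂ,
        (traceNorm (sigmaA2R ψ (U : Matrix (ιA₁ × ιA₂) (ιA₁ × ιA₂) ℂ)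
            - (((Fintype.card ιA₂ : ℂ))⁻¹ • (1 : Matrix ιA₂ ιA₂ ℂ)) ⊗ₖ ptrFst ψ)) ^ 2 ∂μ)
      ≤ (2 * (Fintype.card ιA₁ * Fintype.card ιA₂ * Fintype.card ιR : ℝ)
            / (Fintype.card ιA₁ : ℝ) ^ 2)
        * ((ψ * ψ).trace.re
            + 2 * ((ptrSnd ψ * ptrSnd ψ).trace.re) * ((ptrFst ψ * ptrFst ψ).trace.re)) := by
  have : μ.IsMulLeftInvariant := ⟨hμ⟩
  obtain ⟨⟨⟨a₁, a₂⟩, _⟩⟩ := nonempty_of_trace_ne_zero (hψtr ▸ one_ne_zero : ψ.trace ≠ 0)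
  have : Nonempty ιA₁ := ⟨a₁⟩
  have : Nonempty ιA₂ := ⟨a₂⟩
  refine (decoupling_to_product_general μ ψ).trans ?_
  rw [mul_div_assoc 2, mul_comm (2 : ℝ), mul_assoc (_ / _)]
  gcongr
  exact re_trace_mul_conjTranspose_self_le_two_mul hψ.1
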